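/- Let f(x) = Σ_{i=0}^{3} a_i x^{q^i} and g(x) = Σ_{i=0}^{3} b_i x^{q^i} be q-polynomials over F_{q^4} with D_f = D_g, and suppose f is not F_{q^2}-linear (equivalently, a_1 ≠ 0 or a_3 ≠ 0), i.e. the maximum field of linearity of f is F_q. Then there exists λ ∈ F_{q^4}, λ ≠ 0, such that either g(x) = f(λx)/λ for all x ∈ F_{q^4}, or g(x) = f̂(λx)/λ for all x ∈ F_{q^4}. -/

import Mathlib

section CyclicRoots

variable {F : Type*} [Field F] [Fintype F]

/-- In the cyclic group `Fˣ` of order `m * k`, the `m`-torsion consists of `k`-th powers. -/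
theorem exists_pow_eq_of_pow_eq_one {m k : ℕ} (hc : Fintype.card F = m * k + 1) (hm : 0 < m)
    {u : F} (hu : u ^ m = 1) : ∃ v : F, v ≠ 0 ∧ v ^ k = u := by
  have hu0 : u ≠ 0 := by
    rintro rfl
    rw [zero_pow hm.ne'] at hu
    exact zero_ne_one hu
  obtain ⟨g, hg⟩ := IsCyclic.exists_generator (α := Fˣ)
  obtain ⟨i, hi⟩ := Subgroup.mem_zpowers_iff.mp (hg (Units.mk0 u hu0))
  have ho : orderOf g = m * k := by
    classical
    rw [orderOf_eq_card_of_forall_mem_zpowers hg, Nat.card_eq_fintype_card, Fintype.card_units, hc,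
      Nat.add_sub_cancel]
  have h1 : g ^ (i * m) = 1 := by
    rw [zpow_mul, hi]
    ext
    simpa using hu
  have h2 : ((m * k : ℕ) : ℤ) ∣ i * m := by
    rw [← ho]
    exact orderOf_dvd_iff_zpow_eq_one.mpr h1
  have h3 : (k : ℤ) ∣ i := by
    rw [Nat.cast_mul, mul_comm i] at h2
    exact Int.dvd_of_mul_dvd_mul_left (by exact_mod_cast hm.ne') h2
  obtain ⟨j, rfl⟩ := h3
  refine ⟨((g ^ j : Fˣ) : F), Units.ne_zero _, ?_⟩
  have h4 : (g ^ j) ^ k = Units.mk0 u hu0 := by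
    rw [← hi, ← zpow_natCast, ← zpow_mul, mul_comm]
  simpa using congrArg Units.val h4

end CyclicRoots

section PowerSums

/-- Uniqueness of base-`q` expansions modulo `q ^ 4 - 1`, for digit vectors with equal sums. -/
theorem digits_eq_zero_of_dvd {q c₀ c₁ c₂ c₃ : ℤ} (hq : 2 ≤ q) (h₀ : -1 ≤ c₀) (h₁ : -1 ≤ c₁)
    (h₂ : -1 ≤ c₂) (h₃ : -1 ≤ c₃) (hs : c₀ + c₁ + c₂ + c₃ = 0)
    (hd : q ^ 4 - 1 ∣ c₀ + c₁ * q + c₂ * q ^ 2 + c₃ * q ^ 3) :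
    c₀ = 0 ∧ c₁ = 0 ∧ c₂ = 0 ∧ c₃ = 0 := by
  obtain ⟨k, hk⟩ := hd
  -- the carries of the addition with carry
  obtain ⟨t₁, ht₁⟩ : ∃ t, c₀ + k = q * t :=
    ⟨k * q ^ 3 - c₁ - c₂ * q - c₃ * q ^ 2, by linear_combination hk⟩
  have hq0 : q ≠ 0 := by omega
  obtain ⟨t₂, ht₂⟩ : ∃ t, c₁ + t₁ = q * t :=
    ⟨k * q ^ 2 - c₂ - c₃ * q, mul_left_cancel₀ hq0 (by linear_combination hk - ht₁)⟩
  obtain ⟨t₃, ht₃⟩ : ∃ t, c₂ + t₂ = q * t :=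
    ⟨k * q - c₃, mul_left_cancel₀ hq0 (mul_left_cancel₀ hq0
      (by linear_combination hk - ht₁ - q * ht₂))⟩
  have ht₀ : c₃ + t₃ = q * k := mul_left_cancel₀ hq0 (mul_left_cancel₀ hq0 (mul_left_cancel₀ hq0
      (by linear_combination hk - ht₁ - q * ht₂ - q ^ 2 * ht₃)))
  have hsum : k + t₁ + t₂ + t₃ = 0 := by
    have : (q - 1) * (k + t₁ + t₂ + t₃) = 0 := by
      linear_combination hs - ht₁ - ht₂ - ht₃ - ht₀
    rcases mul_eq_zero.mp this with h | h
    · omega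
    · exact h
  have step : ∀ c t s : ℤ, -1 ≤ c → c + t = q * s → s < 0 → t < 0 := fun c t s hc h hs => by
    nlinarith
  have s₀ := step _ _ _ h₀ ht₁
  have s₁ := step _ _ _ h₁ ht₂
  have s₂ := step _ _ _ h₂ ht₃
  have s₃ := step _ _ _ h₃ ht₀
  have z : k = 0 ∧ t₁ = 0 ∧ t₂ = 0 ∧ t₃ = 0 := by
    clear step ht₀ ht₁ ht₂ ht₃ hk
    omega
  obtain ⟨rfl, rfl, rfl, rfl⟩ := z
  simp at ht₀ ht₁ ht₂ ht₃
  exact ⟨ht₁, ht₂, ht₃, ht₀⟩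

theorem dvd_sum_four_pow_iff {q : ℤ} (hq : 2 ≤ q) (i j k l : Fin 4) :
    q ^ 4 - 1 ∣ q ^ (i : ℕ) + q ^ (j : ℕ) + q ^ (k : ℕ) + q ^ (l : ℕ)
        - (1 + q + q ^ 2 + q ^ 3) ↔
      ∀ m : Fin 4, m = i ∨ m = j ∨ m = k ∨ m = l := by
  let δ : Fin 4 → Fin 4 → ℤ := fun m i => if m = i then 1 else 0
  let c : Fin 4 → ℤ := fun m => δ m i + δ m j + δ m k + δ m l - 1
  have hδ : ∀ i : Fin 4, q ^ (i : ℕ) = δ 0 i + δ 1 i * q + δ 2 i * q ^ 2 + δ 3 i * q ^ 3 := by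
    intro i
    fin_cases i <;> simp [δ]
  have hδ0 : ∀ m i, 0 ≤ δ m i := by
    intro m i
    simp only [δ]
    split_ifs <;> norm_num
  have hδs : ∀ i, δ 0 i + δ 1 i + δ 2 i + δ 3 i = 1 := by decide
  have hc : ∀ m, -1 ≤ c m := fun m => by
    have := hδ0 m i
    have := hδ0 m j
    have := hδ0 m k
    have := hδ0 m l
    simp only [c]
    omega
  have hcs : c 0 + c 1 + c 2 + c 3 = 0 := by
    simp only [c]
    linear_combination hδs i + hδs j + hδs k + hδs l
  have he : q ^ (i : ℕ) + q ^ (j : ℕ) + q ^ (k : ℕ) + q ^ (l : ℕ) - (1 + q + q ^ 2 + q ^ 3)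
      = c 0 + c 1 * q + c 2 * q ^ 2 + c 3 * q ^ 3 := by
    simp only [c, hδ]
    ring
  have hcz : (∀ m, c m = 0) ↔ ∀ m : Fin 4, m = i ∨ m = j ∨ m = k ∨ m = l := by
    clear hcs he hc
    simp only [c, δ]
    clear hδ hδ0 hδs c δ hq
    revert i j k l
    decide
  rw [he, ← hcz]
  constructor
  · intro h
    obtain ⟨h0, h1, h2, h3⟩ :=
      digits_eq_zero_of_dvd hq (hc 0) (hc 1) (hc 2) (hc 3) hcs h
    intro m
    fin_cases m <;> assumption
  · intro h
    simp [h]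

variable {F : Type*} [Field F] [Fintype F] [DecidableEq F]

theorem sum_units_pow_div_pow {N : ℕ} (hc : Fintype.card F = N + 1) (n d : ℕ) :
    ∑ x : Fˣ, (x : F) ^ n / (x : F) ^ d = if (N : ℤ) ∣ n - d then -1 else 0 := by
  have hN : 1 ≤ N := by
    have := Fintype.one_lt_card (α := F)
    omega
  have h1 : ∀ x : Fˣ, (x : F) ^ n / (x : F) ^ d = ((x ^ (n + d * (N - 1)) : Fˣ) : F) := by
    intro x
    have hx : (x : F) ^ N = 1 := by
      have := FiniteField.pow_card_sub_one_eq_one (x : F) x.ne_zero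
      rwa [hc, Nat.add_sub_cancel] at this
    rw [div_eq_iff (pow_ne_zero _ x.ne_zero), Units.val_pow_eq_pow_val, ← pow_add]
    have : n + d * (N - 1) + d = n + N * d := by
      obtain ⟨M, rfl⟩ := Nat.exists_eq_add_of_le hN
      rw [Nat.add_sub_cancel_left]
      ring
    rw [this, pow_add, pow_mul, hx, one_pow, mul_one]
  rw [Finset.sum_congr rfl fun x _ => h1 x]
  have h2 := FiniteField.sum_pow_units F (n + d * (N - 1))
  simp only [Units.val_pow_eq_pow_val] at h2 ⊢
  rw [h2, hc, Nat.add_sub_cancel]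
  have h3 : N ∣ n + d * (N - 1) ↔ (N : ℤ) ∣ n - d := by
    rw [← Int.natCast_dvd_natCast]
    have : ((n + d * (N - 1) : ℕ) : ℤ) = (n - d) + N * d := by
      push_cast [hN]
      ring
    rw [this]
    exact (Int.dvd_add_left (dvd_mul_right _ _))
  simp only [h3]

/-- The sum over `Fˣ` of a product of four `q`-polynomials, divided by the norm, is minus the
permanent of the matrix of coefficients. -/
theorem sum_units_prod_qpoly_div_norm {q : ℕ} (hq : 2 ≤ q) (hF : Fintype.card F = q ^ 4)
    (α β γ δ : Fin 4 → F) :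
    ∑ x : Fˣ, ((∑ i, α i * (x : F) ^ q ^ (i : ℕ)) * (∑ i, β i * (x : F) ^ q ^ (i : ℕ)) *
        (∑ i, γ i * (x : F) ^ q ^ (i : ℕ)) * (∑ i, δ i * (x : F) ^ q ^ (i : ℕ))) /
        (x : F) ^ (1 + q + q ^ 2 + q ^ 3) =
      -∑ i, ∑ j, ∑ k, ∑ l, if ∀ m : Fin 4, m = i ∨ m = j ∨ m = k ∨ m = l then
        α i * β j * γ k * δ l else 0 := by
  have hpos : 1 ≤ q ^ 4 := Nat.one_le_pow _ _ (by omega)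
  have h1 : ∀ x : Fˣ, ((∑ i, α i * (x : F) ^ q ^ (i : ℕ)) * (∑ i, β i * (x : F) ^ q ^ (i : ℕ)) *
        (∑ i, γ i * (x : F) ^ q ^ (i : ℕ)) * (∑ i, δ i * (x : F) ^ q ^ (i : ℕ))) /
        (x : F) ^ (1 + q + q ^ 2 + q ^ 3) =
      ∑ i, ∑ j, ∑ k, ∑ l, α i * β j * γ k * δ l *
        ((x : F) ^ (q ^ (i : ℕ) + q ^ (j : ℕ) + q ^ (k : ℕ) + q ^ (l : ℕ)) /
          (x : F) ^ (1 + q + q ^ 2 + q ^ 3)) := by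
    intro x
    simp only [mul_assoc]
    simp only [Finset.sum_mul]
    simp only [Finset.mul_sum, Finset.sum_div]
    refine Finset.sum_congr rfl fun i _ => Finset.sum_congr rfl fun j _ =>
      Finset.sum_congr rfl fun k _ => Finset.sum_congr rfl fun l _ => ?_
    simp only [pow_add]
    ring
  rw [Finset.sum_congr rfl fun x _ => h1 x, Finset.sum_comm, ← Finset.sum_neg_distrib]
  refine Finset.sum_congr rfl fun i _ => ?_
  rw [Finset.sum_comm, ← Finset.sum_neg_distrib]
  refine Finset.sum_congr rfl fun j _ => ?_
  rw [Finset.sum_comm, ← Finset.sum_neg_distrib]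
  refine Finset.sum_congr rfl fun k _ => ?_
  rw [Finset.sum_comm, ← Finset.sum_neg_distrib]
  refine Finset.sum_congr rfl fun l _ => ?_
  rw [← Finset.mul_sum, sum_units_pow_div_pow (N := q ^ 4 - 1) (by omega)]
  have h2 := dvd_sum_four_pow_iff (q := (q : ℤ)) (by exact_mod_cast hq) i j k l
  push_cast [hpos]
  simp only [h2]
  split_ifs <;> simp

end PowerSums

section DirectionSet

variable {F : Type*} [Field F] [Fintype F] [DecidableEq F]

/-- For additive maps the number of `x ≠ 0` with `u x / x = y` is `-1` in `F` as soon as it is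
nonzero, so a sum of `h (u x / x)` depends only on the set of directions `u x / x`. -/
theorem sum_units_directions_eq {p : ℕ} [Fact p.Prime] [CharP F p] (u v : F →+ F)
    (hD : {y : F | ∃ x : F, x ≠ 0 ∧ u x / x = y} = {y : F | ∃ x : F, x ≠ 0 ∧ v x / x = y})
    (h : F → F) :
    ∑ x : Fˣ, h (u x / x) = ∑ x : Fˣ, h (v x / x) := by
  classical
  have key : ∀ w : F →+ F, ∑ x : Fˣ, h (w x / x) =
      ∑ y : F, if y ∈ {y : F | ∃ x : F, x ≠ 0 ∧ w x / x = y} then -h y else 0 := by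
    intro w
    rw [← Finset.sum_fiberwise (s := Finset.univ) (g := fun x : Fˣ => w x / x)]
    refine Finset.sum_congr rfl fun y _ => ?_
    have h1 : ∑ x ∈ Finset.univ.filter (fun x : Fˣ => w x / x = y), h (w x / x) =
        ((Finset.univ.filter (fun x : Fˣ => w x / x = y)).card : F) * h y := by
      rw [← nsmul_eq_mul, ← Finset.sum_const]
      refine Finset.sum_congr rfl fun x hx => ?_
      rw [(Finset.mem_filter.mp hx).2]
    rw [h1]
    split_ifs with hy
    · let K : AddSubgroup F := (w - AddMonoidHom.mulLeft y).ker
      have hK : ∀ x, x ∈ K ↔ w x = y * x := fun x => by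
        simp [K, AddMonoidHom.mem_ker, sub_eq_zero]
      have hpK : p ∣ Nat.card K := by
        obtain ⟨x, hx, hxy⟩ := hy
        have hxK : x ∈ K := (hK x).mpr ((div_eq_iff hx).mp hxy)
        have := addOrderOf_dvd_natCard (⟨x, hxK⟩ : K)
        have ho : addOrderOf (⟨x, hxK⟩ : K) = p := by
          refine addOrderOf_eq_prime ?_ ?_
          · ext
            simp
          · simpa using hx
        rwa [ho] at this
      have hcard : Nat.card K = (Finset.univ.filter (fun x : Fˣ => w x / x = y)).card + 1 := by
        have hins : Finset.univ.filter (· ∈ K) = insert 0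
            ((Finset.univ.filter (fun x : Fˣ => w x / x = y)).map ⟨Units.val, Units.val_injective⟩) := by
          ext x
          rcases eq_or_ne x 0 with rfl | hx
          · simp [K.zero_mem]
          · simp only [Finset.mem_filter, Finset.mem_univ, true_and, Finset.mem_insert, hx,
              Finset.mem_map, Function.Embedding.coeFn_mk, false_or, hK]
            constructor
            · intro h
              exact ⟨Units.mk0 x hx, (div_eq_iff hx).mpr h, rfl⟩
            · rintro ⟨z, hz, rfl⟩
              exact (div_eq_iff z.ne_zero).mp hz
        rw [Nat.card_eq_fintype_card, Fintype.card_subtype, hins, Finset.card_insert_of_notMem,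
          Finset.card_map]
        simp
      have h2 : (((Finset.univ.filter (fun x : Fˣ => w x / x = y)).card + 1 : ℕ) : F) = 0 := by
        rw [← hcard]
        exact (CharP.cast_eq_zero_iff F p _).mpr hpK
      push_cast at h2
      linear_combination h y * h2
    · have : Finset.univ.filter (fun x : Fˣ => w x / x = y) = ∅ := by
        rw [Finset.filter_eq_empty_iff]
        intro x _ hx
        exact hy ⟨x, x.ne_zero, hx⟩
      simp [this]
  rw [key u, key v]
  simp only [hD]

end DirectionSet

section Semilinear

variable {F : Type*} [Field F] [Fintype F] {q : ℕ} {φ : F →+* F}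

theorem apply_four_eq_self (hF : Fintype.card F = q ^ 4) (hφ : ∀ x, φ x = x ^ q) (x : F) :
    φ (φ (φ (φ x))) = x := by
  simp only [hφ, ← pow_mul]
  have := FiniteField.pow_card x
  rwa [hF, show q ^ 4 = q * q * q * q by ring] at this

/-- Hilbert 90 for the extension of degree four. -/
theorem exists_apply_eq_mul_of_norm_eq_one (hq : 2 ≤ q) (hF : Fintype.card F = q ^ 4)
    (hφ : ∀ x, φ x = x ^ q) {t : F} (ht : t * φ t * φ (φ t) * φ (φ (φ t)) = 1) :
    ∃ m : F, m ≠ 0 ∧ φ m = t * m := by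
  obtain ⟨r, rfl⟩ := Nat.exists_eq_add_of_le hq
  obtain ⟨v, hv, h⟩ := exists_pow_eq_of_pow_eq_one (F := F)
    (m := 1 + (2 + r) + (2 + r) ^ 2 + (2 + r) ^ 3) (k := 1 + r) (u := t)
    (by rw [hF]; ring) (by positivity) (by
      rw [← ht]
      simp only [hφ]
      ring)
  refine ⟨v, hv, ?_⟩
  rw [← h, hφ]
  ring

/-- Hilbert 90 for the fixed field of `φ ^ 2`. -/
theorem exists_apply_eq_mul_of_mul_apply_eq_one (hq : 2 ≤ q) (hF : Fintype.card F = q ^ 4)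
    (hφ : ∀ x, φ x = x ^ q) {t : F} (ht : t * φ t = 1) :
    ∃ m : F, m ≠ 0 ∧ φ (φ m) = m ∧ φ m = t * m := by
  have h4 := apply_four_eq_self hF hφ
  obtain ⟨r, rfl⟩ := Nat.exists_eq_add_of_le hq
  obtain ⟨v, hv, h⟩ := exists_pow_eq_of_pow_eq_one (F := F)
    (m := 1 + (2 + r)) (k := (1 + r) * ((2 + r) ^ 2 + 1)) (u := t)
    (by rw [hF]; ring) (by positivity) (by
      rw [← ht]
      simp only [hφ]
      ring)
  refine ⟨v * φ (φ v), by simpa using hv, ?_, ?_⟩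
  · rw [map_mul, map_mul, h4, mul_comm]
  · rw [← h]
    simp only [hφ]
    ring

/-- Hilbert 90 over the fixed field of `φ ^ 2`. -/
theorem exists_apply_apply_eq_mul (hq : 2 ≤ q) (hF : Fintype.card F = q ^ 4)
    (hφ : ∀ x, φ x = x ^ q) {t : F} (ht : t * φ (φ t) = 1) :
    ∃ m : F, m ≠ 0 ∧ φ (φ m) = t * m := by
  obtain ⟨r, rfl⟩ := Nat.exists_eq_add_of_le hq
  obtain ⟨v, hv, h⟩ := exists_pow_eq_of_pow_eq_one (F := F)
    (m := 1 + (2 + r) ^ 2) (k := (1 + r) * (3 + r)) (u := t)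
    (by rw [hF]; ring) (by positivity) (by
      rw [← ht]
      simp only [hφ]
      ring)
  refine ⟨v, hv, ?_⟩
  rw [← h]
  simp only [hφ]
  ring

/-- For `a x ^ q + c x ^ q ^ 3`, the norms and `a * φ c` determine the scaling class. -/
theorem exists_scaling_of_norm_eq (hq : 2 ≤ q) (hF : Fintype.card F = q ^ 4)
    (hφ : ∀ x, φ x = x ^ q) {a c A C : F} (h : A * φ C = a * φ c)
    (hA : A * φ A * φ (φ A) * φ (φ (φ A)) = a * φ a * φ (φ a) * φ (φ (φ a)))
    (hC : C * φ C * φ (φ C) * φ (φ (φ C)) = c * φ c * φ (φ c) * φ (φ (φ c))) :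
    ∃ m : F, m ≠ 0 ∧ A * m = a * φ m ∧ C * m = c * φ (φ (φ m)) := by
  have h4 := apply_four_eq_self hF hφ
  rcases eq_or_ne a 0 with rfl | ha
  · have hA0 : A = 0 := by simpa using hA
    rcases eq_or_ne c 0 with rfl | hc
    · have hC0 : C = 0 := by simpa using hC
      exact ⟨1, one_ne_zero, by simp [hA0], by simp [hC0]⟩
    · obtain ⟨m, hm, h1⟩ := exists_apply_eq_mul_of_norm_eq_one hq hF hφ (t := C / c) (by
        have hc1 : φ c ≠ 0 := by simpa using hc
        have hc2 : φ (φ c) ≠ 0 := by simpa using hc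
        have hc3 : φ (φ (φ c)) ≠ 0 := by simpa using hc
        simp only [map_div₀]
        field_simp
        exact hC)
      have hm1 : φ m ≠ 0 := by simpa using hm
      refine ⟨(φ m)⁻¹, inv_ne_zero hm1, by simp [hA0], ?_⟩
      simp only [map_inv₀, h4]
      field_simp
      rw [h1]
      field_simp
  · have ha1 : φ a ≠ 0 := by simpa using ha
    have ha2 : φ (φ a) ≠ 0 := by simpa using ha
    have ha3 : φ (φ (φ a)) ≠ 0 := by simpa using ha
    obtain ⟨m, hm, h1⟩ := exists_apply_eq_mul_of_norm_eq_one hq hF hφ (t := A / a) (by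
        simp only [map_div₀]
        field_simp
        exact hA)
    have hAm : A * m = a * φ m := by
      rw [h1]
      field_simp
    refine ⟨m, hm, hAm, ?_⟩
    have h2 : φ m * φ C = m * φ c := mul_left_cancel₀ ha (by
      linear_combination m * h - φ C * hAm)
    have h3 := congrArg (fun x => φ (φ (φ x))) h2
    simp only [map_mul, h4] at h3
    linear_combination h3

theorem exists_scaling_of_mul_apply_eq (hq : 2 ≤ q) (hF : Fintype.card F = q ^ 4)
    (hφ : ∀ x, φ x = x ^ q) {a c A C : F} (h : A * φ C = a * φ c)
    (hA : A * φ A = a * φ a) (hC : C * φ C = c * φ c) :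
    ∃ m : F, m ≠ 0 ∧ φ (φ m) = m ∧ A * m = a * φ m ∧ C * m = c * φ m := by
  have h4 := apply_four_eq_self hF hφ
  rcases eq_or_ne a 0 with rfl | ha
  · have hA0 : A = 0 := by simpa using hA
    rcases eq_or_ne c 0 with rfl | hc
    · have hC0 : C = 0 := by simpa using hC
      exact ⟨1, one_ne_zero, by simp, by simp [hA0], by simp [hC0]⟩
    · have hc1 : φ c ≠ 0 := by simpa using hc
      obtain ⟨m, hm, hmm, h1⟩ := exists_apply_eq_mul_of_mul_apply_eq_one hq hF hφ (t := C / c) (by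
        simp only [map_div₀]
        field_simp
        exact hC)
      refine ⟨m, hm, hmm, by simp [hA0], ?_⟩
      rw [h1]
      field_simp
  · have ha1 : φ a ≠ 0 := by simpa using ha
    obtain ⟨m, hm, hmm, h1⟩ := exists_apply_eq_mul_of_mul_apply_eq_one hq hF hφ (t := A / a) (by
        simp only [map_div₀]
        field_simp
        exact hA)
    have hAm : A * m = a * φ m := by
      rw [h1]
      field_simp
    refine ⟨m, hm, hmm, hAm, ?_⟩
    have h2 : φ m * φ C = m * φ c := mul_left_cancel₀ ha (by
      linear_combination m * h - φ C * hAm)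
    have h3 := congrArg (fun x => φ (φ (φ x))) h2
    simp only [map_mul, h4, hmm] at h3
    linear_combination h3

theorem exists_scaling_of_trinomial (hq : 2 ≤ q) (hF : Fintype.card F = q ^ 4)
    (hφ : ∀ x, φ x = x ^ q) {a b c A B C : F} (hb : b ≠ 0) (h : A * φ C = a * φ c)
    (hB : B * φ (φ B) = b * φ (φ b))
    (hA : A * φ A * φ (φ B) = a * φ a * φ (φ b))
    (hC : B * φ C * φ (φ C) = b * φ c * φ (φ c)) :
    ∃ m : F, m ≠ 0 ∧ A * m = a * φ m ∧ B * m = b * φ (φ m) ∧ C * m = c * φ (φ (φ m)) := by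
  have h4 := apply_four_eq_self hF hφ
  have hb2 : φ (φ b) ≠ 0 := by simpa using hb
  obtain ⟨l, hl, h1⟩ := exists_apply_apply_eq_mul hq hF hφ (t := B / b) (by
    simp only [map_div₀]
    field_simp
    exact hB)
  have hBl : B * l = b * φ (φ l) := by
    rw [h1]
    field_simp
  have hBl2 : φ (φ B) * φ (φ l) = φ (φ b) * l := by
    simpa only [map_mul, h4] using congrArg (fun x => φ (φ x)) hBl
  have hl1 : φ l ≠ 0 := by simpa using hl
  have hl2 : φ (φ l) ≠ 0 := by simpa using hl
  have hl3 : φ (φ (φ l)) ≠ 0 := by simpa using hl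
  have hA' : A * φ A * l = a * φ a * φ (φ l) := mul_left_cancel₀ hb2 (by
    linear_combination φ (φ l) * hA - A * φ A * hBl2)
  have hC' : φ C * φ (φ C) * φ (φ l) = φ c * φ (φ c) * l := mul_left_cancel₀ hb (by
    linear_combination l * hC - φ C * φ (φ C) * hBl)
  have hC'' : C * φ C * φ l = c * φ c * φ (φ (φ l)) := by
    simpa only [map_mul, h4] using congrArg (fun x => φ (φ (φ x))) hC'
  obtain ⟨m, hm, hmm, hAm, hCm⟩ := exists_scaling_of_mul_apply_eq hq hF hφ
    (a := a * φ l / l) (c := c * φ (φ (φ l)) / l) (A := A) (C := C)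
    (by
      simp only [map_div₀, map_mul, h4]
      field_simp
      exact h)
    (by
      simp only [map_div₀, map_mul]
      field_simp
      linear_combination hA')
    (by
      simp only [map_div₀, map_mul, h4]
      field_simp
      linear_combination hC'')
  field_simp at hAm hCm
  refine ⟨l * m, mul_ne_zero hl hm, ?_, ?_, ?_⟩
  · rw [map_mul]
    linear_combination hAm
  · rw [map_mul, map_mul, hmm]
    linear_combination m * hBl
  · rw [map_mul, map_mul, map_mul, hmm]
    linear_combination hCm

/-- The invariants of a linear set determine the triple of coefficients up to scaling and
adjunction. -/
theorem exists_scaling_or_adjoint_scaling (hq : 2 ≤ q) (hF : Fintype.card F = q ^ 4)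
    (hφ : ∀ x, φ x = x ^ q) {a b c A B C : F} (h : A * φ C = a * φ c)
    (hB : B * φ (φ B) = b * φ (φ b))
    (hS : A * φ A * φ (φ B) + B * φ C * φ (φ C) = a * φ a * φ (φ b) + b * φ c * φ (φ c))
    (hN : b = 0 → B = 0 →
      A * φ A * φ (φ A) * φ (φ (φ A)) + C * φ C * φ (φ C) * φ (φ (φ C)) =
      a * φ a * φ (φ a) * φ (φ (φ a)) + c * φ c * φ (φ c) * φ (φ (φ c))) :
    ∃ m : F, m ≠ 0 ∧
      ((A * m = a * φ m ∧ B * m = b * φ (φ m) ∧ C * m = c * φ (φ (φ m))) ∨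
      (A * m = φ c * φ m ∧ B * m = φ (φ b) * φ (φ m) ∧ C * m = φ (φ (φ a)) * φ (φ (φ m)))) := by
  have h4 := apply_four_eq_self hF hφ
  have h' := congrArg φ h
  have h'' := congrArg φ h'
  have h''' := congrArg φ h''
  simp only [map_mul, h4] at h' h'' h'''
  have pair : ∀ {X Y x y : F}, X + Y = x + y → X * Y = x * y →
      X = x ∧ Y = y ∨ X = y ∧ Y = x := by
    intro X Y x y hs hp
    have : (X - x) * (X - y) = 0 := by linear_combination X * hs - hp
    rcases mul_eq_zero.mp this with h | h
    · exact Or.inl ⟨by linear_combination h, by linear_combination hs - h⟩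
    · exact Or.inr ⟨by linear_combination h, by linear_combination hs - h⟩
  rcases eq_or_ne b 0 with rfl | hb
  · have hB0 : B = 0 := by simpa using hB
    have hP : (A * φ A * φ (φ A) * φ (φ (φ A))) * (C * φ C * φ (φ C) * φ (φ (φ C))) =
        (a * φ a * φ (φ a) * φ (φ (φ a))) * (c * φ c * φ (φ c) * φ (φ (φ c))) := by
      calc _ = (A * φ C) * (φ A * φ (φ C)) * (φ (φ A) * φ (φ (φ C))) * (φ (φ (φ A)) * C) := by
            ring
        _ = _ := by
            rw [h, h', h'', h''']
            ring
    rcases pair (hN rfl hB0) hP with ⟨hA, hC⟩ | ⟨hA, hC⟩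
    · obtain ⟨m, hm, h1, h2⟩ := exists_scaling_of_norm_eq hq hF hφ h hA hC
      exact ⟨m, hm, Or.inl ⟨h1, by simp [hB0], h2⟩⟩
    · obtain ⟨m, hm, h1, h2⟩ := exists_scaling_of_norm_eq hq hF hφ (a := φ c) (c := φ (φ (φ a)))
        (A := A) (C := C) (by rw [h, h4, mul_comm])
        (by rw [hA, h4]; ring) (by rw [hC, h4]; ring)
      exact ⟨m, hm, Or.inr ⟨h1, by simp [hB0], h2⟩⟩
  · have hP : (A * φ A * φ (φ B)) * (B * φ C * φ (φ C)) =
        (a * φ a * φ (φ b)) * (b * φ c * φ (φ c)) := by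
      calc _ = (A * φ C) * (φ A * φ (φ C)) * (B * φ (φ B)) := by ring
        _ = _ := by
            rw [h, h', hB]
            ring
    rcases pair hS hP with ⟨hA, hC⟩ | ⟨hA, hC⟩
    · obtain ⟨m, hm, h1⟩ := exists_scaling_of_trinomial hq hF hφ hb h hB hA hC
      exact ⟨m, hm, Or.inl h1⟩
    · obtain ⟨m, hm, h1⟩ := exists_scaling_of_trinomial hq hF hφ (a := φ c) (b := φ (φ b))
        (c := φ (φ (φ a))) (A := A) (B := B) (C := C) (by simpa using hb)
        (by rw [h, h4, mul_comm]) (by rw [hB, h4, mul_comm])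
        (by rw [hA, h4]; ring) (by rw [hC, h4]; ring)
      exact ⟨m, hm, Or.inr h1⟩

end Semilinear

section Invariants

variable {F : Type*} [Field F] [Fintype F] [DecidableEq F] {q : ℕ} {φ : F →+* F}

/-- `sum_units_prod_qpoly_div_norm` in terms of the Frobenius endomorphism `φ`. -/
theorem sum_units_prod_frobenius_div_norm (hq : 2 ≤ q) (hF : Fintype.card F = q ^ 4)
    (hφ : ∀ x, φ x = x ^ q) (α β γ δ : Fin 4 → F) :
    ∑ x : Fˣ,
        ((α 0 * x + α 1 * φ x + α 2 * φ (φ x) + α 3 * φ (φ (φ x))) / (x : F)) *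
        ((β 0 * x + β 1 * φ x + β 2 * φ (φ x) + β 3 * φ (φ (φ x))) / φ (x : F)) *
        ((γ 0 * x + γ 1 * φ x + γ 2 * φ (φ x) + γ 3 * φ (φ (φ x))) / φ (φ (x : F))) *
        ((δ 0 * x + δ 1 * φ x + δ 2 * φ (φ x) + δ 3 * φ (φ (φ x))) / φ (φ (φ (x : F)))) =
      -∑ i, ∑ j, ∑ k, ∑ l, if ∀ m : Fin 4, m = i ∨ m = j ∨ m = k ∨ m = l then
        α i * β j * γ k * δ l else 0 := by
  rw [← sum_units_prod_qpoly_div_norm hq hF]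
  refine Finset.sum_congr rfl fun x _ => ?_
  have h2 : ∀ x, x ^ q ^ 2 = φ (φ x) := fun x => by rw [hφ, hφ, ← pow_mul, pow_two]
  have h3 : ∀ x, x ^ q ^ 3 = φ (φ (φ x)) := fun x => by
    rw [← h2, hφ, ← pow_mul, ← pow_succ']
  simp only [Fin.sum_univ_four, h3, h2, ← hφ, Fin.val_zero, Fin.val_one, Fin.val_two,
    show ((3 : Fin 4) : ℕ) = 3 from rfl, pow_zero, pow_one, pow_add, div_mul_div_comm]

theorem sum_units_qpoly_div (hq : 2 ≤ q) (hF : Fintype.card F = q ^ 4)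
    (hφ : ∀ x, φ x = x ^ q) (s a b c : F) :
    ∑ x : Fˣ, (s * x + a * φ x + b * φ (φ x) + c * φ (φ (φ x))) / (x : F) = -s := by
  have h := sum_units_prod_frobenius_div_norm hq hF hφ ![s, a, b, c] ![0, 1, 0, 0] ![0, 0, 1, 0]
    ![0, 0, 0, 1]
  simpa +decide [Fin.sum_univ_four] using h

theorem sum_units_mul_apply (hq : 2 ≤ q) (hF : Fintype.card F = q ^ 4)
    (hφ : ∀ x, φ x = x ^ q) {a b c : F} {y : F → F}
    (hy : ∀ x, y x = (a * φ x + b * φ (φ x) + c * φ (φ (φ x))) / x) :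
    ∑ x : Fˣ, y x * φ (y x) = -(a * φ c) := by
  have h4 := apply_four_eq_self hF hφ
  have h := sum_units_prod_frobenius_div_norm hq hF hφ ![0, a, b, c] ![φ c, 0, φ a, φ b]
    ![0, 0, 1, 0] ![0, 0, 0, 1]
  simp +decide [Fin.sum_univ_four] at h
  rw [← h]
  refine Finset.sum_congr rfl fun x _ => ?_
  simp only [hy, map_div₀, map_add, map_mul, h4]
  ring

theorem sum_units_mul_apply_apply (hq : 2 ≤ q) (hF : Fintype.card F = q ^ 4)
    (hφ : ∀ x, φ x = x ^ q) {a b c : F} {y : F → F}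
    (hy : ∀ x, y x = (a * φ x + b * φ (φ x) + c * φ (φ (φ x))) / x) :
    ∑ x : Fˣ, y x * φ (φ (y x)) = -(b * φ (φ b)) := by
  have h4 := apply_four_eq_self hF hφ
  have h := sum_units_prod_frobenius_div_norm hq hF hφ ![0, a, b, c] ![0, 1, 0, 0]
    ![φ (φ b), φ (φ c), 0, φ (φ a)] ![0, 0, 0, 1]
  simp +decide [Fin.sum_univ_four] at h
  rw [← h]
  refine Finset.sum_congr rfl fun x _ => ?_
  simp only [hy, map_div₀, map_add, map_mul, h4]
  ring

theorem sum_units_mul_apply_mul_apply_apply (hq : 2 ≤ q) (hF : Fintype.card F = q ^ 4)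
    (hφ : ∀ x, φ x = x ^ q) {a b c : F} {y : F → F}
    (hy : ∀ x, y x = (a * φ x + b * φ (φ x) + c * φ (φ (φ x))) / x) :
    ∑ x : Fˣ, y x * φ (y x) * φ (φ (y x)) =
      -(a * φ a * φ (φ b) + b * φ c * φ (φ c)) := by
  have h4 := apply_four_eq_self hF hφ
  have h := sum_units_prod_frobenius_div_norm hq hF hφ ![0, a, b, c] ![φ c, 0, φ a, φ b]
    ![φ (φ b), φ (φ c), 0, φ (φ a)] ![0, 0, 0, 1]
  simp +decide [Fin.sum_univ_four] at h
  refine Eq.trans ?_ (h.trans ?_)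
  · refine Finset.sum_congr rfl fun x _ => ?_
    simp only [hy, map_div₀, map_add, map_mul, h4]
    ring
  · ring

theorem sum_units_norm (hq : 2 ≤ q) (hF : Fintype.card F = q ^ 4)
    (hφ : ∀ x, φ x = x ^ q) {a c : F} {y : F → F}
    (hy : ∀ x, y x = (a * φ x + c * φ (φ (φ x))) / x) :
    ∑ x : Fˣ, y x * φ (y x) * φ (φ (y x)) * φ (φ (φ (y x))) =
      -((a * φ (φ a) + c * φ (φ c)) * (φ a * φ (φ (φ a)) + φ c * φ (φ (φ c)))) := by
  have h4 := apply_four_eq_self hF hφ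
  have h := sum_units_prod_frobenius_div_norm hq hF hφ ![0, a, 0, c] ![φ c, 0, φ a, 0]
    ![0, φ (φ c), 0, φ (φ a)] ![φ (φ (φ a)), 0, φ (φ (φ c)), 0]
  simp +decide [Fin.sum_univ_four] at h
  refine Eq.trans ?_ (h.trans ?_)
  · refine Finset.sum_congr rfl fun x _ => ?_
    simp only [hy, map_div₀, map_add, map_mul, h4]
    ring
  · ring

end Invariants

/-- if two q-polynomials `f, g` over `F_{q^4}` define the same linear set
and the maximum field of linearity of `f` is `F_q` (i.e. `a_1 ≠ 0` or `a_3 ≠ 0`), then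
`g(x) = f(λx)/λ` or `g(x) = f̂(λx)/λ` for some nonzero `λ`, where
`f̂(x) = a_0 x + a_3^q x^q + a_2^{q^2} x^{q^2} + a_1^{q^3} x^{q^3}` is the adjoint of `f`. -/
theorem stmt_8 (p e q : ℕ) (hp : p.Prime) (he : 0 < e) (hq : q = p ^ e)
    (F : Type) [Field F] [Fintype F] (hF : Fintype.card F = q ^ 4)
    (a b : ℕ → F) (f g fhat : F → F)
    (hf : ∀ x : F, f x = ∑ i ∈ Finset.range 4, a i * x ^ q ^ i)
    (hg : ∀ x : F, g x = ∑ i ∈ Finset.range 4, b i * x ^ q ^ i)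
    (hfhat : ∀ x : F, fhat x =
      a 0 * x + (a 3) ^ q * x ^ q + (a 2) ^ q ^ 2 * x ^ q ^ 2 + (a 1) ^ q ^ 3 * x ^ q ^ 3)
    (hD : {y : F | ∃ x : F, x ≠ 0 ∧ f x / x = y} = {y : F | ∃ x : F, x ≠ 0 ∧ g x / x = y})
    (hlin : a 1 ≠ 0 ∨ a 3 ≠ 0) :
    ∃ l : F, l ≠ 0 ∧
      ((∀ x : F, g x = f (l * x) / l) ∨ (∀ x : F, g x = fhat (l * x) / l)) := by
  classical
  have : Fact p.Prime := ⟨hp⟩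
  have hq2 : 2 ≤ q := by
    rw [hq]
    exact hp.two_le.trans (Nat.le_self_pow he.ne' p)
  have : CharP F p := charP_of_card_eq_prime_pow (f := e * 4) (by
    rw [hF, hq, pow_mul])
  obtain ⟨φ, hφ⟩ : ∃ φ : F →+* F, ∀ x, φ x = x ^ q :=
    ⟨iterateFrobenius F p e, fun x => by rw [iterateFrobenius_def, hq]⟩
  have h4 := apply_four_eq_self hF hφ
  have hφ2 : ∀ x, x ^ q ^ 2 = φ (φ x) := fun x => by rw [hφ, hφ, ← pow_mul, pow_two]
  have hφ3 : ∀ x, x ^ q ^ 3 = φ (φ (φ x)) := fun x => by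
    rw [← hφ2, hφ, ← pow_mul, ← pow_succ']
  simp only [Finset.sum_range_succ, Finset.sum_range_zero, zero_add, pow_zero, pow_one, hφ3, hφ2,
    ← hφ] at hf hg hfhat
  have hadd : ∀ (w : F → F) (s : ℕ → F),
      (∀ x, w x = s 0 * x + s 1 * φ x + s 2 * φ (φ x) + s 3 * φ (φ (φ x))) →
      ∃ u : F →+ F, ∀ x, u x = w x := fun w s hw =>
    ⟨AddMonoidHom.mk' w fun x y => by simp only [hw, map_add]; ring, fun _ => rfl⟩
  obtain ⟨u, hu⟩ := hadd f a hf
  obtain ⟨v, hv⟩ := hadd g b hg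
  have key := sum_units_directions_eq (p := p) u v (by simpa only [hu, hv] using hD)
  simp only [hu, hv] at key
  have h0 : b 0 = a 0 := by
    have h := key fun y => y
    simp only [hf, hg, sum_units_qpoly_div hq2 hF hφ] at h
    exact (neg_injective h).symm
  have shift : ∀ (w : F → F) (s : ℕ → F),
      (∀ x, w x = s 0 * x + s 1 * φ x + s 2 * φ (φ x) + s 3 * φ (φ (φ x))) → s 0 = a 0 →
      ∀ h : F → F, ∑ x : Fˣ, h (w x / x - a 0) =
        ∑ x : Fˣ, h ((s 1 * φ x + s 2 * φ (φ x) + s 3 * φ (φ (φ x))) / x) := by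
    intro w s hw hs h
    refine Finset.sum_congr rfl fun x _ => congrArg h ?_
    have hx := x.ne_zero
    rw [hw, hs]
    field_simp
    ring
  have key' : ∀ h : F → F,
      ∑ x : Fˣ, h ((b 1 * φ x + b 2 * φ (φ x) + b 3 * φ (φ (φ x))) / x) =
        ∑ x : Fˣ, h ((a 1 * φ x + a 2 * φ (φ x) + a 3 * φ (φ (φ x))) / x) := fun h => by
    rw [← shift f a hf rfl, ← shift g b hg h0]
    exact (key fun y => h (y - a 0)).symm
  have e1 := key' fun y => y * φ y
  have e2 := key' fun y => y * φ (φ y)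
  have e3 := key' fun y => y * φ y * φ (φ y)
  have e4 := key' fun y => y * φ y * φ (φ y) * φ (φ (φ y))
  rw [sum_units_mul_apply hq2 hF hφ (y := fun x => _) (fun x => rfl),
    sum_units_mul_apply hq2 hF hφ (y := fun x => _) (fun x => rfl), neg_inj] at e1
  rw [sum_units_mul_apply_apply hq2 hF hφ (y := fun x => _) (fun x => rfl),
    sum_units_mul_apply_apply hq2 hF hφ (y := fun x => _) (fun x => rfl), neg_inj] at e2
  rw [sum_units_mul_apply_mul_apply_apply hq2 hF hφ (y := fun x => _) (fun x => rfl),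
    sum_units_mul_apply_mul_apply_apply hq2 hF hφ (y := fun x => _) (fun x => rfl), neg_inj] at e3
  have e1' := congrArg φ e1
  have e1'' := congrArg φ e1'
  have e1''' := congrArg φ e1''
  simp only [map_mul, h4] at e1' e1'' e1'''
  obtain ⟨l, hl, h | h⟩ := exists_scaling_or_adjoint_scaling hq2 hF hφ e1 e2 e3
    (fun ha hb => by
      simp only [ha, hb, zero_mul, add_zero] at e4
      rw [sum_units_norm hq2 hF hφ (y := fun x => _) (fun x => rfl),
        sum_units_norm hq2 hF hφ (y := fun x => _) (fun x => rfl), neg_inj] at e4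
      have m1 : b 1 * φ (φ (b 1)) * (φ (b 3) * φ (φ (φ (b 3)))) =
          a 1 * φ (φ (a 1)) * (φ (a 3) * φ (φ (φ (a 3)))) := by
        linear_combination φ (φ (b 1)) * φ (φ (φ (b 3))) * e1 + a 1 * φ (a 3) * e1''
      have m2 : b 3 * φ (φ (b 3)) * (φ (b 1) * φ (φ (φ (b 1)))) =
          a 3 * φ (φ (a 3)) * (φ (a 1) * φ (φ (φ (a 1)))) := by
        linear_combination φ (φ (φ (b 1))) * b 3 * e1' + φ (a 1) * φ (φ (a 3)) * e1'''
      linear_combination e4 - m1 - m2)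
  · obtain ⟨h1, h2, h3⟩ := h
    refine ⟨l, hl, Or.inl fun x => ?_⟩
    rw [eq_div_iff hl, hf, hg, h0]
    simp only [map_mul]
    linear_combination φ x * h1 + φ (φ x) * h2 + φ (φ (φ x)) * h3
  · obtain ⟨h1, h2, h3⟩ := h
    refine ⟨l, hl, Or.inr fun x => ?_⟩
    rw [eq_div_iff hl, hfhat, hg, h0]
    simp only [map_mul]
    linear_combination φ x * h1 + φ (φ x) * h2 + φ (φ (φ x)) * h3
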